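/- Fix b > 0, 0 < α ≤ 1, E ∈ ℝ. Define Cₙ = [[1, -b],[1, 0]] + (2n)^{-α}[[bE + E/(2b), 0],[E/(2b), -E/2]] + (2n)^{-1}[[0, 0],[-α, αb]], B̃ₙ = [[0, 1],[-1, 2]] + (2n)^{-α}[[0, 0],[0, bE]] + n^{-1}[[0, 0],[α, -α]], and Bₙ = T_{2n}T_{2n-1} as in the critical Jacobi model. Then CₙBₙCₙ^{-1} = -B̃ₙ + O(n^{-2α}), i.e., there is a constant C with ‖CₙBₙCₙ^{-1} + B̃ₙ‖ ≤ C·n^{-2α} for all sufficiently large n. -/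

import Mathlib

/-- Diagonal entries `bₙ = b nᵅ` (n odd), `0` (n even). -/
noncomputable def bcrit (b α : ℝ) (n : ℕ) : ℝ := if Odd n then b * (n : ℝ) ^ α else 0

/-- One-step transfer matrix `Tₘ = [[0,1],[-a_{m-1}/aₘ, (E - bₘ)/aₘ]]`, `aₙ = nᵅ`. -/
noncomputable def Tcrit (b α E : ℝ) (m : ℕ) : Matrix (Fin 2) (Fin 2) ℝ :=
  !![0, 1; -((((m : ℝ) - 1) / (m : ℝ)) ^ α), (E - bcrit b α m) / (m : ℝ) ^ α]

/-- Two-step transfer matrix `Bₙ = T_{2n} T_{2n-1}`. -/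
noncomputable def Bcrit (b α E : ℝ) (n : ℕ) : Matrix (Fin 2) (Fin 2) ℝ :=
  Tcrit b α E (2 * n) * Tcrit b α E (2 * n - 1)

/-- The conjugating matrices `Cₙ`. -/
noncomputable def Cmat (b α E : ℝ) (n : ℕ) : Matrix (Fin 2) (Fin 2) ℝ :=
  !![1, -b; 1, 0]
    + ((2 * (n : ℝ)) ^ α)⁻¹ • !![b * E + E / (2 * b), 0; E / (2 * b), -E / 2]
    + (2 * (n : ℝ))⁻¹ • !![0, 0; -α, α * b]

/-- The model matrices `B̃ₙ`. -/
noncomputable def Btilde (b α E : ℝ) (n : ℕ) : Matrix (Fin 2) (Fin 2) ℝ :=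
  !![0, 1; -1, 2] + ((2 * (n : ℝ)) ^ α)⁻¹ • !![0, 0; 0, b * E]
    + ((n : ℝ))⁻¹ • !![0, 0; α, -α]

/-- Second-order expansion of `(1 - t) ^ α`. -/
lemma rpow_expand (α t : ℝ) (h0 : 0 < α) (h1 : α ≤ 1) (ht0 : 0 ≤ t) (ht : t ≤ 1 / 2) :
    -t ^ 2 ≤ (1 - t) ^ α - 1 + α * t ∧ (1 - t) ^ α - 1 + α * t ≤ 0 := by
  have key : ∀ β : ℝ, 0 ≤ β → β ≤ 1 → (1 - t) ^ β ≤ 1 - β * t := by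
    intro β hβ0 hβ1
    have := rpow_one_add_le_one_add_mul_self (s := -t) (by linarith) hβ0 hβ1
    calc (1 - t) ^ β = (1 + -t) ^ β := by ring_nf
      _ ≤ _ := this
      _ = _ := by ring
  have hA := key α h0.le h1
  have hB := key (1 - α) (by linarith) (by linarith)
  have hpos : 0 < (1 - t) ^ α := Real.rpow_pos_of_pos (by linarith) _
  have hmul : (1 - t) ^ α * (1 - t) ^ (1 - α) = 1 - t := by
    rw [← Real.rpow_add (by linarith)]
    simp
  refine ⟨?_, by linarith⟩
  set A := (1 - t) ^ α
  have h2 : 1 - t ≤ A * (1 - (1 - α) * t) := by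
    rw [← hmul]; exact mul_le_mul_of_nonneg_left hB hpos.le
  have h3 : (1 : ℝ) / 2 ≤ 1 - (1 - α) * t := by nlinarith
  have h4 : 0 ≤ (A - 1 + α * t + t ^ 2) * (1 - (1 - α) * t) := by
    have h5 : -(α * (1 - α) * t ^ 2) ≤ (A - 1 + α * t) * (1 - (1 - α) * t) := by nlinarith
    have h6 : t ^ 2 * (1 / 2) ≤ t ^ 2 * (1 - (1 - α) * t) :=
      mul_le_mul_of_nonneg_left h3 (sq_nonneg t)
    have h7 : α * (1 - α) ≤ 1 / 2 := by nlinarith [sq_nonneg (α - 1 / 2)]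
    have h8 : α * (1 - α) * t ^ 2 ≤ 1 / 2 * t ^ 2 := mul_le_mul_of_nonneg_right h7 (sq_nonneg t)
    nlinarith
  have := nonneg_of_mul_nonneg_left h4 (by linarith)
  linarith

/-- The conjugating matrix in terms of `x = (2n)^{-α}`, `y = 1/(2n)`. -/
noncomputable def Cx (b α E x y : ℝ) : Matrix (Fin 2) (Fin 2) ℝ :=
  !![1 + x * (b * E + E / (2 * b)), -b; 1 + x * (E / (2 * b)) - y * α, -(x * E / 2) + y * α * b]

/-- The two-step matrix in terms of its ingredients. -/
noncomputable def Bx (b E x r s z : ℝ) : Matrix (Fin 2) (Fin 2) ℝ :=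
  !![-s, E * z - b; -(E * x * s), -r + E * x * (E * z - b)]

/-- The model matrix. -/
noncomputable def Tx (b α E x y : ℝ) : Matrix (Fin 2) (Fin 2) ℝ :=
  !![0, 1; -1 + 2 * α * y, 2 + x * b * E - 2 * α * y]

/-- The quadratic remainder. -/
noncomputable def Qx (b α E x v p q k : ℝ) : Matrix (Fin 2) (Fin 2) ℝ :=
  !![(1/2) * b⁻¹ * α * E * v + (-1/2) * b⁻¹ * E * x * q + (-1) * q,
    (1/2) * b⁻¹ * E^2 + (1/2) * b⁻¹ * E^2 * x * k + E * k + b * p;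
    (1/2) * b⁻¹ * α * E * v + (-1/2) * b⁻¹ * E * x * q + (-1) * q + α^2 * v^2
      + α * x * v * q + E^2 + (-1/2) * α * E^2 * x * v + (1/2) * E^2 * x^2 * q
      + b * α^2 * E * x * v^2 + (-1) * b * α * E * x^2 * v * q,
    (1/2) * b⁻¹ * E^2 + (1/2) * b⁻¹ * E^2 * x * k + E * k + (-1/2) * α * E * v
      + (-1) * α * E * x * v * k + (1/2) * E * x * p + (-1/2) * E^3 * x
      + (-1/2) * E^3 * x^2 * k + (-1) * b * α^2 * v^2 + (-1) * b * α * x * v * p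
      + b * α * E^2 * x * v + b * α * E^2 * x^2 * v * k]

lemma algebra_id (b α E x v p q k : ℝ) (hb : b ≠ 0) :
    Cx b α E x (x * v) * Bx b E x (1 - α * (x * v) + x ^ 2 * p) (1 - α * (x * v) + x ^ 2 * q)
      (x + x ^ 2 * k) + Tx b α E x (x * v) * Cx b α E x (x * v)
      = x ^ 2 • Qx b α E x v p q k := by
  ext i j
  fin_cases i <;> fin_cases j <;>
    simp [Cx, Bx, Tx, Qx, Matrix.mul_apply, Fin.sum_univ_two] <;> field_simp <;> ring

lemma det_id (b α E x v : ℝ) (hb : b ≠ 0) :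
    (Cx b α E x (x * v)).det
      = b + x ^ 2 * ((b * E + E / (2 * b)) * (-(E / 2) + v * α * b)) := by
  rw [Cx, Matrix.det_fin_two_of]
  field_simp
  ring

lemma bounded_aux (f : ℝ × ℝ × ℝ × ℝ × ℝ → ℝ) (hf : Continuous f) :
    ∃ K : ℝ, 0 ≤ K ∧ ∀ x v p q k : ℝ, |x| ≤ 8 → |v| ≤ 8 → |p| ≤ 8 → |q| ≤ 8 → |k| ≤ 8 →
      |f (x, v, p, q, k)| ≤ K := by
  have hc : IsCompact (Metric.closedBall (0 : ℝ × ℝ × ℝ × ℝ × ℝ) 8) :=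
    isCompact_closedBall _ _
  obtain ⟨K, hK⟩ := hc.exists_bound_of_continuousOn hf.continuousOn
  refine ⟨|K|, abs_nonneg _, fun x v p q k hx hv hp hq hk => ?_⟩
  refine (hK (x, v, p, q, k) ?_).trans (le_abs_self K)
  rw [mem_closedBall_zero_iff]
  simp [Prod.norm_def, hx, hv, hp, hq, hk]

lemma adj_cont (b α E : ℝ) (i j : Fin 2) :
    Continuous (fun w : ℝ × ℝ × ℝ × ℝ × ℝ =>
      (Qx b α E w.1 w.2.1 w.2.2.1 w.2.2.2.1 w.2.2.2.2
        * (Cx b α E w.1 (w.1 * w.2.1)).adjugate) i j) := by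
  fin_cases i <;> fin_cases j <;>
    simp [Qx, Cx, Matrix.mul_apply, Fin.sum_univ_two, Matrix.adjugate_fin_two] <;> fun_prop

lemma main_bound (b α E : ℝ) (hb : 0 < b) :
    ∃ K δ : ℝ, 0 < δ ∧ 0 ≤ K ∧ ∀ x y r s z : ℝ, 0 < x → x ≤ 1 → x ≤ δ → 0 ≤ y → y ≤ x →
      |r - 1 + α * y| ≤ 8 * x ^ 2 → |s - 1 + α * y| ≤ 8 * x ^ 2 → |z - x| ≤ 8 * x ^ 2 →
      ∀ i j, |(Cx b α E x y * Bx b E x r s z * (Cx b α E x y)⁻¹ + Tx b α E x y) i j|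
        ≤ K * x ^ 2 := by
  choose K hK0 hK using fun i j => bounded_aux _ (adj_cont b α E i j)
  obtain ⟨L, hL0, hL⟩ := bounded_aux
    (fun w => (b * E + E / (2 * b)) * (-(E / 2) + w.2.1 * α * b)) (by fun_prop)
  refine ⟨(∑ i, ∑ j, K i j) * (2 / b), b / (2 * (L + 1)), by positivity, ?_, ?_⟩
  · exact mul_nonneg (Finset.sum_nonneg fun i _ => Finset.sum_nonneg fun j _ => hK0 i j)
      (by positivity)
  intro x y r s z hx hx1 hxδ hy hyx hr hs hz i j
  have hx2 : 0 < x ^ 2 := by positivity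
  have resc : ∀ t : ℝ, |t| ≤ 8 * x ^ 2 → |t / x ^ 2| ≤ 8 := by
    intro t ht
    rw [abs_div, abs_of_pos hx2, div_le_iff₀ hx2]; exact ht
  have e1 : y = x * (y / x) := by field_simp
  have hv : |y / x| ≤ 8 := by
    rw [abs_of_nonneg (by positivity), div_le_iff₀ hx]; linarith
  have hxa : |x| ≤ 8 := by rw [abs_of_pos hx]; linarith
  have hp := resc _ hr
  have hq := resc _ hs
  have hk := resc _ hz
  have er : r = 1 - α * y + x ^ 2 * ((r - 1 + α * y) / x ^ 2) := by field_simp; ring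
  have es : s = 1 - α * y + x ^ 2 * ((s - 1 + α * y) / x ^ 2) := by field_simp; ring
  have ez : z = x + x ^ 2 * ((z - x) / x ^ 2) := by field_simp; ring
  generalize (r - 1 + α * y) / x ^ 2 = p at *
  generalize (s - 1 + α * y) / x ^ 2 = q at *
  generalize (z - x) / x ^ 2 = k at *
  generalize y / x = v at *
  clear hr hs hz
  subst er es ez e1
  have hid := algebra_id b α E x v p q k hb.ne'
  have hdet := det_id b α E x v hb.ne'
  have hLb := hL x v p q k hxa hv hp hq hk
  have hdetb : b / 2 ≤ (Cx b α E x (x * v)).det := by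
    rw [hdet]
    simp only at hLb
    generalize (b * E + E / (2 * b)) * (-(E / 2) + v * α * b) = G at *
    have h1 := (abs_le.1 hLb).1
    have h2 : x * (L + 1) ≤ b / 2 := by
      rw [le_div_iff₀ (by positivity)] at hxδ; linarith
    have h3 : x ^ 2 * L ≤ x * (L + 1) := by
      have h5 : x ^ 2 ≤ x := by nlinarith
      have h6 : x ^ 2 * L ≤ x * L := mul_le_mul_of_nonneg_right h5 hL0
      nlinarith
    nlinarith
  have hdpos : 0 < (Cx b α E x (x * v)).det := by linarith [half_pos hb]
  have hKij := hK i j x v p q k hxa hv hp hq hk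
  simp only at hKij
  generalize Cx b α E x (x * v) = C at *
  generalize Qx b α E x v p q k = Q at *
  generalize Tx b α E x (x * v) = T at *
  generalize Bx b E x _ _ _ = B at *
  have hu : IsUnit C.det := hdpos.ne'.isUnit
  have hEq : C * B * C⁻¹ + T = (x ^ 2 * C.det⁻¹) • (Q * C.adjugate) := by
    have : C * B * C⁻¹ + T = (C * B + T * C) * C⁻¹ := by
      rw [add_mul, Matrix.mul_assoc T, Matrix.mul_nonsing_inv _ hu, Matrix.mul_one]
    rw [this, hid, Matrix.inv_def, Ring.inverse_eq_inv']
    simp [smul_smul, mul_comm]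
  rw [hEq, Matrix.smul_apply, smul_eq_mul, abs_mul, abs_mul, abs_of_pos hx2,
    abs_of_pos (inv_pos.2 hdpos)]
  have hinv : C.det⁻¹ ≤ 2 / b := by
    rw [← inv_div]; exact inv_anti₀ (by positivity) hdetb
  have hsum : K i j ≤ ∑ i, ∑ j, K i j :=
    (Finset.single_le_sum (f := fun j => K i j) (fun j _ => hK0 i j) (Finset.mem_univ j)).trans
      (Finset.single_le_sum (f := fun i => ∑ j, K i j)
        (fun i _ => Finset.sum_nonneg fun j _ => hK0 i j) (Finset.mem_univ i))
  calc x ^ 2 * C.det⁻¹ * |(Q * C.adjugate) i j|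
      ≤ x ^ 2 * (2 / b) * ∑ i, ∑ j, K i j := by
        gcongr
        exact hKij.trans hsum
    _ = _ := by ring

/-- Lemma 2.1: `Cₙ Bₙ Cₙ⁻¹ = -B̃ₙ + O(n^{-2α})`, i.e. there are a
constant `C` and an `N` with `‖Cₙ Bₙ Cₙ⁻¹ + B̃ₙ‖ ≤ C n^{-2α}` (entrywise) for all `n ≥ N`. -/
theorem stmt4 (b α E : ℝ) (hb : 0 < b) (h0 : 0 < α) (h1 : α ≤ 1) :
    ∃ C : ℝ, ∃ N : ℕ, ∀ n : ℕ, N ≤ n → ∀ i j : Fin 2,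
      |(Cmat b α E n * Bcrit b α E n * (Cmat b α E n)⁻¹ + Btilde b α E n) i j|
        ≤ C * (n : ℝ) ^ (-(2 * α)) := by
  obtain ⟨K, δ, hδ, hK0, hK⟩ := main_bound b α E hb
  have hlim : Filter.Tendsto (fun n : ℕ => ((2 * (n : ℝ)) ^ α)⁻¹) Filter.atTop (nhds 0) := by
    apply Filter.Tendsto.inv_tendsto_atTop
    apply (tendsto_rpow_atTop h0).comp
    exact tendsto_natCast_atTop_atTop.const_mul_atTop (by norm_num)
  obtain ⟨N, hN⟩ := Filter.eventually_atTop.1 (hlim.eventually (ge_mem_nhds hδ))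
  refine ⟨K, max N 2, fun n hn i j => ?_⟩
  have hnN : N ≤ n := (le_max_left _ _).trans hn
  have hn2 : 2 ≤ n := (le_max_right _ _).trans hn
  have hnR : (2 : ℝ) ≤ n := by exact_mod_cast hn2
  have hxδ := hN n hnN
  have hm : (0 : ℝ) < 2 * n := by linarith
  set x : ℝ := ((2 * (n : ℝ)) ^ α)⁻¹ with hxdef
  set y : ℝ := (2 * (n : ℝ))⁻¹ with hydef
  have hX : 0 < (2 * (n : ℝ)) ^ α := Real.rpow_pos_of_pos hm _
  have hx : 0 < x := inv_pos.2 hX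
  have hx1 : x ≤ 1 := inv_le_one_of_one_le₀ (Real.one_le_rpow (by linarith) h0.le)
  have hy : 0 < y := inv_pos.2 hm
  have hyx : y ≤ x := by
    apply inv_anti₀ hX
    calc (2 * (n : ℝ)) ^ α ≤ (2 * (n : ℝ)) ^ (1 : ℝ) :=
          Real.rpow_le_rpow_of_exponent_le (by linarith) h1
      _ = _ := Real.rpow_one _
  have hy4 : y ≤ 1 / 4 := by
    rw [hydef, inv_eq_one_div]
    exact one_div_le_one_div_of_le (by norm_num) (by linarith)
  have hy2x : y ^ 2 ≤ x ^ 2 := by gcongr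
  have hcast : ((2 * n - 1 : ℕ) : ℝ) = 2 * n - 1 := by
    rw [Nat.cast_sub (by omega)]; push_cast; ring
  have hodd : Odd (2 * n - 1) := ⟨n - 1, by omega⟩
  have heven : ¬ Odd (2 * n) := by simp
  set r : ℝ := ((2 * (n : ℝ) - 1) / (2 * n)) ^ α with hr
  set s : ℝ := ((2 * (n : ℝ) - 1 - 1) / (2 * n - 1)) ^ α with hs
  set z : ℝ := ((2 * (n : ℝ) - 1) ^ α)⁻¹ with hz
  have hM : 0 < (2 * (n : ℝ) - 1) ^ α := Real.rpow_pos_of_pos (by linarith) _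
  have hC : Cmat b α E n = Cx b α E x y := by
    unfold Cmat Cx
    ext i j
    fin_cases i <;> fin_cases j <;> simp [← hxdef] <;> ring
  have hT : Btilde b α E n = Tx b α E x y := by
    unfold Btilde Tx
    have : ((n : ℝ))⁻¹ = 2 * y := by rw [hydef]; field_simp
    rw [this]
    ext i j
    fin_cases i <;> fin_cases j <;> simp [← hxdef] <;> ring
  have hB : Bcrit b α E n = Bx b E x r s z := by
    have hzz : (E - b * (2 * (n : ℝ) - 1) ^ α) / (2 * (n : ℝ) - 1) ^ α = E * z - b := by
      rw [hz]; field_simp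
    have h2 : ((2 * n : ℕ) : ℝ) = 2 * n := by push_cast; ring
    unfold Bcrit Tcrit Bx bcrit
    rw [if_pos hodd, if_neg heven, hcast, h2, hzz, ← hr, ← hs, sub_zero, div_eq_mul_inv, ← hxdef]
    ext i j
    fin_cases i <;> fin_cases j <;> simp [Matrix.mul_apply, Fin.sum_univ_two]
  have hrt : r = (1 - y) ^ α := by
    rw [hr, hydef]; congr 1; field_simp
  set w : ℝ := (2 * (n : ℝ) - 1)⁻¹ with hw
  have hM1 : 0 < 2 * (n : ℝ) - 1 := by linarith
  have hst : s = (1 - w) ^ α := by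
    rw [hs, hw]; congr 1; field_simp
  have hw0 : 0 < w := inv_pos.2 hM1
  have hwy : w * (1 - y) = y := by
    rw [hw, hydef]; field_simp
  have hw2 : w ≤ 2 * y := by nlinarith
  have hwy2 : w - y ≤ 2 * y ^ 2 := by nlinarith
  have hwy0 : 0 ≤ w - y := by nlinarith
  obtain ⟨ra, rb⟩ := rpow_expand α y h0 h1 hy.le (by linarith)
  obtain ⟨sa, sb⟩ := rpow_expand α w h0 h1 hw0.le (by linarith)
  rw [← hrt] at ra rb
  rw [← hst] at sa sb
  have hzr : z * r = x := by
    rw [hz, hr, hxdef, Real.div_rpow hM1.le hm.le]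
    field_simp
  have hz0 : 0 < z := inv_pos.2 hM
  have hmain := hK x y r s z hx hx1 hxδ hy.le hyx
    (by rw [abs_le]; constructor <;> linarith [sq_nonneg x])
    (by
      have hww : w ^ 2 ≤ 4 * y ^ 2 := by
        calc w ^ 2 ≤ (2 * y) ^ 2 := by gcongr
          _ = _ := by ring
      have ha : α * (w - y) ≤ 2 * y ^ 2 :=
        (mul_le_of_le_one_left hwy0 h1).trans hwy2
      have hb' : 0 ≤ α * (w - y) := by positivity
      rw [abs_le]; constructor <;> linarith [sq_nonneg x])
    (by
      have hay : α * y ≤ y := mul_le_of_le_one_left hy.le h1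
      have hyy : y ^ 2 ≤ y * (1 / 4) := by rw [sq]; gcongr
      have hay0 : 0 < α * y := by positivity
      have hr4 : 1 / 4 ≤ r := by linarith
      have h1r : 1 - r ≤ 2 * y := by linarith
      have h1r0 : 0 ≤ 1 - r := by linarith
      have hz4 : z ≤ 4 * x := by
        have := mul_le_mul_of_nonneg_left hr4 hz0.le
        linarith
      have hzx : z - x = z * (1 - r) := by rw [← hzr]; ring
      rw [hzx, abs_of_nonneg (by positivity)]
      calc z * (1 - r) ≤ (4 * x) * (2 * y) := by gcongr
        _ ≤ (4 * x) * (2 * x) := by gcongr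
        _ = _ := by ring) i j
  rw [hC, hT, hB]
  refine hmain.trans (mul_le_mul_of_nonneg_left ?_ hK0)
  have hnp : (0 : ℝ) < n := by linarith
  have : x ≤ (n : ℝ) ^ (-α) := by
    rw [Real.rpow_neg hnp.le, hxdef]
    exact inv_anti₀ (Real.rpow_pos_of_pos hnp _)
      (Real.rpow_le_rpow hnp.le (by linarith) h0.le)
  calc x ^ 2 ≤ ((n : ℝ) ^ (-α)) ^ 2 := by gcongr
    _ = _ := by
      rw [← Real.rpow_natCast, ← Real.rpow_mul hnp.le]; congr 1; push_cast; ring
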